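/- arXiv:math/0407028 — 2 statements merged into one kernel-verified Lean document; each statement's English description precedes it below -/
import Mathlib

section
/- For fixed v ∈ ℝ³ and indices 1 ≤ k, ℓ ≤ 3, the spherical average ∫_{|ω|=1} ω_ℓ (√(1+|v|²)+ω·v)^{-3} dω = -4π v_ℓ /(each component), more precisely: v_k ∫_{|ω|=1} ω_ℓ dω/(√(1+|v|²)+ω·v)³ = -4π v_k v_ℓ + (correction): the identity ∫_{|ω|=1} ω_ℓ dω/(√(1+|v|²)+ω·v)³ = -4π v_ℓ holds... State: ∫_{|ω|=1} ω_ℓ dω/(√(1+|v|²)+ω·v)³ = -4π v_ℓ is false in general; the correct claim is: ∫_{|ω|=1} dω/(√(1+|v|²)+ω·v)³ = 4π√(1+|v|²). -/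
open MeasureTheory Real
open scoped RealInnerProductSpace

/-!
Let `a = √(1 + |v|²)` and `n = dim E`. In polar coordinates the convex body
`K = {x | a|x| + x·v < 1}` has volume `n⁻¹ ∫ (a + ω·v)⁻ⁿ dω`. Now `K` is the set of spatial parts
`x` of the points `(-1, y)`, `|y| < 1`, moved by the Lorentz boost whose four-velocity is `(a, v)`:
the boosted time is `-(a - y·v)`, on that slice `1 - x·v = a (a - y·v)`, and invariance of the
Minkowski form turns `|x| < a - y·v` into `|y| < 1`. The map `y ↦ x` is affine with determinant
`a`, so `vol K = a · vol (unit ball)`.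
-/

section PolarCoordinates

variable {E : Type*} [NormedAddCommGroup E] [NormedSpace ℝ E] [FiniteDimensional ℝ E]
  [MeasurableSpace E] [BorelSpace E] (μ : Measure E) [μ.IsAddHaarMeasure]

lemma measure_eq_lintegral_toSphere_volumeIoiPow [Nontrivial E] {s : Set E}
    (hs : MeasurableSet s) :
    μ s = ∫⁻ ω : Metric.sphere (0 : E) 1,
      Measure.volumeIoiPow (Module.finrank ℝ E - 1) {r | (r : ℝ) • (ω : E) ∈ s} ∂μ.toSphere := by
  let t : Set (Metric.sphere (0 : E) 1 × Set.Ioi (0 : ℝ)) := {p | (p.2 : ℝ) • (p.1 : E) ∈ s}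
  have ht : MeasurableSet t := hs.preimage (by fun_prop)
  have preimage_t : homeomorphUnitSphereProd E ⁻¹' t = Subtype.val ⁻¹' s := by
    ext x
    simp [t, smul_smul, norm_ne_zero_iff.2 x.2]
  calc μ s = μ ({0}ᶜ ∩ s) := by
        rw [Set.inter_comm, ← Set.sdiff_eq, measure_sdiff_null (measure_singleton 0)]
    _ = μ.comap Subtype.val (homeomorphUnitSphereProd E ⁻¹' t) := by
        rw [preimage_t, comap_subtype_coe_apply (measurableSet_singleton _).compl,
          Subtype.image_preimage_coe]
    _ = (μ.toSphere.prod (.volumeIoiPow (Module.finrank ℝ E - 1))) t :=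
        μ.measurePreserving_homeomorphUnitSphereProd.measure_preimage ht.nullMeasurableSet
    _ = _ := Measure.prod_apply ht

variable {g : E → ℝ}

lemma lintegral_toSphere_inv_pow_of_posHomogeneous (hg : Measurable g)
    (hg_pos : ∀ x, x ≠ 0 → 0 < g x) (hg_smul : ∀ r : ℝ, 0 < r → ∀ x, g (r • x) = r * g x) :
    ∫⁻ ω : Metric.sphere (0 : E) 1, ENNReal.ofReal ((g ω ^ Module.finrank ℝ E)⁻¹) ∂μ.toSphere
      = Module.finrank ℝ E * μ {x | g x < 1} := by
  cases subsingleton_or_nontrivial E with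
  | inl h => simp [μ.toSphere_eq_zero_iff.2 h, Module.finrank_zero_of_subsingleton]
  | inr h =>
    have hn : 0 < Module.finrank ℝ E := Module.finrank_pos
    rw [measure_eq_lintegral_toSphere_volumeIoiPow μ (measurableSet_lt hg measurable_const),
      ← lintegral_const_mul' _ _ (ENNReal.natCast_ne_top _)]
    refine lintegral_congr fun ω ↦ ?_
    have hgω : 0 < g ω := hg_pos ω (ne_zero_of_mem_unit_sphere ω)
    have radial_slice : {r : Set.Ioi (0 : ℝ) | (r : ℝ) • (ω : E) ∈ {x | g x < 1}}
        = Set.Iio ⟨(g ω)⁻¹, inv_pos.2 hgω⟩ := by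
      ext r
      have lt_inv_iff_mul_lt : (r : ℝ) < (g ω)⁻¹ ↔ r * g ω < 1 := by rw [← one_div, lt_div_iff₀ hgω]
      simp [hg_smul r r.2, ← Subtype.coe_lt_coe, lt_inv_iff_mul_lt]
    rw [radial_slice, Measure.volumeIoiPow_apply_Iio, Nat.sub_add_cancel hn, Nat.cast_pred hn,
      sub_add_cancel, ← ENNReal.ofReal_natCast, ← ENNReal.ofReal_mul (Nat.cast_nonneg _),
      mul_div_cancel₀ _ (Nat.cast_pos.2 hn).ne', inv_pow]

-- If `{x | g x < 1}` has infinite measure, both sides are the junk value `0`.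
lemma integral_toSphere_inv_pow_of_posHomogeneous (hg : Measurable g)
    (hg_pos : ∀ x, x ≠ 0 → 0 < g x) (hg_smul : ∀ r : ℝ, 0 < r → ∀ x, g (r • x) = r * g x) :
    ∫ ω : Metric.sphere (0 : E) 1, (g ω ^ Module.finrank ℝ E)⁻¹ ∂μ.toSphere
      = Module.finrank ℝ E * μ.real {x | g x < 1} := by
  have integrand_nonneg (ω : Metric.sphere (0 : E) 1) : 0 ≤ (g ω ^ Module.finrank ℝ E)⁻¹ :=
    inv_nonneg.2 (pow_nonneg (hg_pos ω (ne_zero_of_mem_unit_sphere ω)).le _)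
  have integrand_measurable :
      Measurable fun ω : Metric.sphere (0 : E) 1 ↦ (g ω ^ Module.finrank ℝ E)⁻¹ := by fun_prop
  rw [integral_eq_lintegral_of_nonneg_ae (.of_forall integrand_nonneg)
      integrand_measurable.aestronglyMeasurable,
    lintegral_toSphere_inv_pow_of_posHomogeneous μ hg hg_pos hg_smul]
  simp [measureReal_def]

end PolarCoordinates

lemma lt_sqrt_one_add_sq (x : ℝ) : x < √(1 + x ^ 2) :=
  lt_sqrt_of_sq_lt (lt_one_add _)

lemma inv_one_add_sqrt_one_add_sq_mul_sq (x : ℝ) :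
    (1 + √(1 + x ^ 2))⁻¹ * x ^ 2 = √(1 + x ^ 2) - 1 := by
  rw [inv_mul_eq_iff_eq_mul₀ (by positivity)]
  linear_combination -sq_sqrt (by positivity : 0 ≤ 1 + x ^ 2)

section Boost

variable {E : Type*} [NormedAddCommGroup E] [InnerProductSpace ℝ E]

lemma mul_norm_add_inner_pos {a : ℝ} {v x : E} (hva : ‖v‖ < a) (hx : x ≠ 0) :
    0 < a * ‖x‖ + ⟪x, v⟫ := by
  have cauchy_schwarz := neg_le_of_abs_le (abs_real_inner_le_norm x v)
  have : ‖x‖ * ‖v‖ < ‖x‖ * a := by gcongr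
  linarith

/-- The spatial block of the Lorentz boost with four-velocity `(√(1 + ‖v‖²), v)`, that is, the
positive square root of `1 + v ⊗ v`. The full boost sends `(t, y)` to
`(√(1 + ‖v‖²) * t + ⟪v, y⟫, spatialBoost v y + t • v)`. -/
noncomputable def spatialBoost (v : E) : E →ₗ[ℝ] E :=
  LinearMap.transvection ((1 + √(1 + ‖v‖ ^ 2))⁻¹ • innerₛₗ ℝ v) v

lemma spatialBoost_apply (v y : E) :
    spatialBoost v y = y + ((1 + √(1 + ‖v‖ ^ 2))⁻¹ * ⟪v, y⟫) • v := by
  simp [spatialBoost, LinearMap.transvection.apply]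

lemma det_spatialBoost [FiniteDimensional ℝ E] (v : E) :
    LinearMap.det (spatialBoost v) = √(1 + ‖v‖ ^ 2) := by
  simp [spatialBoost, LinearMap.transvection.det, inv_one_add_sqrt_one_add_sq_mul_sq]

lemma inner_spatialBoost_self (v y : E) :
    ⟪spatialBoost v y, v⟫ = √(1 + ‖v‖ ^ 2) * ⟪v, y⟫ := by
  rw [spatialBoost_apply, inner_add_left, real_inner_smul_left, real_inner_self_eq_norm_sq,
    real_inner_comm]
  linear_combination ⟪v, y⟫ * inv_one_add_sqrt_one_add_sq_mul_sq ‖v‖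

lemma spatialBoost_surjective [FiniteDimensional ℝ E] (v : E) :
    Function.Surjective (spatialBoost v) :=
  LinearMap.range_eq_top.1 <| (LinearMap.isUnit_iff_range_eq_top _).1 <|
    (LinearMap.isUnit_iff_isUnit_det _).2 <| by
      rw [det_spatialBoost]
      exact (sqrt_pos.2 (by positivity)).ne'.isUnit

lemma norm_spatialBoost_sq (v y : E) : ‖spatialBoost v y‖ ^ 2 = ‖y‖ ^ 2 + ⟪v, y⟫ ^ 2 := by
  have inv_mul_self : (1 + √(1 + ‖v‖ ^ 2))⁻¹ * (1 + √(1 + ‖v‖ ^ 2)) = 1 :=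
    inv_mul_cancel₀ (by positivity)
  rw [spatialBoost_apply, norm_add_sq_real, real_inner_smul_right, real_inner_comm v y,
    norm_smul, mul_pow, norm_eq_abs, sq_abs]
  linear_combination ⟪v, y⟫ ^ 2 * inv_mul_self +
    (1 + √(1 + ‖v‖ ^ 2))⁻¹ * ⟪v, y⟫ ^ 2 * inv_one_add_sqrt_one_add_sq_mul_sq ‖v‖

lemma norm_spatialBoost_sub_sq (v y : E) :
    ‖spatialBoost v y - v‖ ^ 2 - (√(1 + ‖v‖ ^ 2) - ⟪v, y⟫) ^ 2 = ‖y‖ ^ 2 - 1 := by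
  rw [norm_sub_sq_real, norm_spatialBoost_sq, inner_spatialBoost_self]
  linear_combination -sq_sqrt (by positivity : 0 ≤ 1 + ‖v‖ ^ 2)

lemma one_sub_inner_spatialBoost_sub (v y : E) :
    1 - ⟪spatialBoost v y - v, v⟫ = √(1 + ‖v‖ ^ 2) * (√(1 + ‖v‖ ^ 2) - ⟪v, y⟫) := by
  rw [inner_sub_left, inner_spatialBoost_self, real_inner_self_eq_norm_sq]
  linear_combination -sq_sqrt (by positivity : 0 ≤ 1 + ‖v‖ ^ 2)

lemma norm_spatialBoost_sub_lt_iff (v y : E) :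
    ‖spatialBoost v y - v‖ < √(1 + ‖v‖ ^ 2) - ⟪v, y⟫ ↔ ‖y‖ < 1 := by
  have minkowski := norm_spatialBoost_sub_sq v y
  constructor
  · intro h
    have := pow_lt_pow_left₀ h (norm_nonneg _) two_ne_zero
    exact (sq_lt_one_iff₀ (norm_nonneg y)).1 (by linarith)
  · intro hy
    have time_pos : ⟪v, y⟫ < √(1 + ‖v‖ ^ 2) := calc
      ⟪v, y⟫ ≤ ‖v‖ * ‖y‖ := real_inner_le_norm v y
      _ ≤ ‖v‖ := mul_le_of_le_one_right (norm_nonneg v) hy.le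
      _ < √(1 + ‖v‖ ^ 2) := lt_sqrt_one_add_sq ‖v‖
    have := (sq_lt_one_iff₀ (norm_nonneg y)).2 hy
    exact lt_of_pow_lt_pow_left₀ 2 (by linarith) (by linarith)

lemma sqrt_mul_norm_add_inner_spatialBoost_sub_lt_one_iff (v y : E) :
    √(1 + ‖v‖ ^ 2) * ‖spatialBoost v y - v‖ + ⟪spatialBoost v y - v, v⟫ < 1 ↔ ‖y‖ < 1 := by
  rw [← lt_sub_iff_add_lt, one_sub_inner_spatialBoost_sub, mul_lt_mul_iff_right₀ (by positivity),
    norm_spatialBoost_sub_lt_iff]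

variable [FiniteDimensional ℝ E] [MeasurableSpace E] [BorelSpace E]
  (μ : Measure E) [μ.IsAddHaarMeasure]

lemma measure_sqrt_mul_norm_add_inner_lt_one (v : E) :
    μ {x | √(1 + ‖v‖ ^ 2) * ‖x‖ + ⟪x, v⟫ < 1}
      = ENNReal.ofReal √(1 + ‖v‖ ^ 2) * μ (Metric.ball 0 1) := by
  set K := {x | √(1 + ‖v‖ ^ 2) * ‖x‖ + ⟪x, v⟫ < 1}
  have image_ball : spatialBoost v '' Metric.ball 0 1 = (· - v) ⁻¹' K := by
    have preimage_eq_ball : spatialBoost v ⁻¹' ((· - v) ⁻¹' K) = Metric.ball 0 1 := by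
      ext y
      simpa [K] using sqrt_mul_norm_add_inner_spatialBoost_sub_lt_one_iff v y
    rw [← preimage_eq_ball, Set.image_preimage_eq _ (spatialBoost_surjective v)]
  calc μ K = μ ((· - v) ⁻¹' K) := by
        simp only [sub_eq_add_neg, measure_preimage_add_right]
    _ = μ (spatialBoost v '' Metric.ball 0 1) := by rw [image_ball]
    _ = _ := by
        rw [Measure.addHaar_image_linearMap, det_spatialBoost, abs_of_nonneg (sqrt_nonneg _)]

theorem vkg_sphere_integral_cube_general (v : E) :
    ∫ ω : Metric.sphere (0 : E) 1,
        ((√(1 + ‖v‖ ^ 2) + ⟪(ω : E), v⟫) ^ Module.finrank ℝ E)⁻¹ ∂μ.toSphere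
      = μ.toSphere.real Set.univ * √(1 + ‖v‖ ^ 2) := by
  let g (x : E) : ℝ := √(1 + ‖v‖ ^ 2) * ‖x‖ + ⟪x, v⟫
  have hg_pos (x : E) (hx : x ≠ 0) : 0 < g x :=
    mul_norm_add_inner_pos (lt_sqrt_one_add_sq ‖v‖) hx
  have hg_smul (r : ℝ) (hr : 0 < r) (x : E) : g (r • x) = r * g x := by
    simp only [g, norm_smul, real_inner_smul_left, norm_of_nonneg hr.le]
    ring
  calc _ = ∫ ω : Metric.sphere (0 : E) 1, (g ω ^ Module.finrank ℝ E)⁻¹ ∂μ.toSphere := by simp [g]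
    _ = Module.finrank ℝ E * μ.real {x | g x < 1} :=
        integral_toSphere_inv_pow_of_posHomogeneous μ (by fun_prop) hg_pos hg_smul
    _ = Module.finrank ℝ E * (√(1 + ‖v‖ ^ 2) * μ.real (Metric.ball 0 1)) := by
        simp [g, measureReal_def, measure_sqrt_mul_norm_add_inner_lt_one]
    _ = μ.toSphere.real Set.univ * √(1 + ‖v‖ ^ 2) := by
        rw [Measure.toSphere_real_apply_univ]
        ring

end Boost

lemma toSphere_real_univ_fin_three :
    (volume : Measure (EuclideanSpace ℝ (Fin 3))).toSphere.real Set.univ = 4 * π := by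
  have volume_ball : volume.real (Metric.ball (0 : EuclideanSpace ℝ (Fin 3)) 1) = π * 4 / 3 := by
    simp [measureReal_def, ENNReal.toReal_ofReal (by positivity : 0 ≤ π * 4 / 3)]
  rw [Measure.toSphere_real_apply_univ, volume_ball, finrank_euclideanSpace_fin]
  ring

/-- For fixed `v ∈ ℝ³`, the integral over the unit sphere of
`(√(1+|v|²)+ω·v)⁻³` equals `4π√(1+|v|²)`. -/
theorem vkg_sphere_integral_cube (v : EuclideanSpace ℝ (Fin 3)) :
    ∫ ω : Metric.sphere (0 : EuclideanSpace ℝ (Fin 3)) 1,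
        ((Real.sqrt (1 + ‖v‖ ^ 2) + ⟪(ω : EuclideanSpace ℝ (Fin 3)), v⟫) ^ 3)⁻¹
      ∂((volume : Measure (EuclideanSpace ℝ (Fin 3))).toSphere)
    = 4 * π * Real.sqrt (1 + ‖v‖ ^ 2) := by
  simpa only [finrank_euclideanSpace_fin, toSphere_real_univ_fin_three]
    using vkg_sphere_integral_cube_general volume v
end

section
/- Define for v ∈ ℝ³ with v̂ = v/√(1+|v|²), unit vector ω and 1 ≤ k, ℓ ≤ 3 the kernel a^{kℓ}(ω,v̂) = -3(ω_ℓ v̂_k + ω_k v̂_ℓ)/((1+|v|²)(1+ω·v̂)³) - 3 ω_k ω_ℓ /((1+|v|²)²(1+ω·v̂)⁴) - 2 v̂_k v̂_ℓ /(1+ω·v̂)² + δ_{kℓ}/((1+|v|²)(1+ω·v̂)²). Then ∫_{|ω|=1} a^{kℓ}(ω,v̂) dω = 0. -/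
open MeasureTheory Real
open scoped RealInnerProductSpace

/-- The relativistic velocity `v̂ = v/√(1+|v|²)`. -/
noncomputable def vhat (v : EuclideanSpace ℝ (Fin 3)) : EuclideanSpace ℝ (Fin 3) :=
  (Real.sqrt (1 + ‖v‖ ^ 2))⁻¹ • v

/-- The kernel `a^{kℓ}(ω,v̂)` appearing in the representation of `∂_k∂_ℓ u`. -/
noncomputable def aklKernel (k l : Fin 3) (ω v : EuclideanSpace ℝ (Fin 3)) : ℝ :=
  -3 * (ω l * vhat v k + ω k * vhat v l) / ((1 + ‖v‖ ^ 2) * (1 + ⟪ω, vhat v⟫) ^ 3)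
  - 3 * (ω k * ω l) / ((1 + ‖v‖ ^ 2) ^ 2 * (1 + ⟪ω, vhat v⟫) ^ 4)
  - 2 * (vhat v k * vhat v l) / (1 + ⟪ω, vhat v⟫) ^ 2
  + (if k = l then (1 : ℝ) else 0) / ((1 + ‖v‖ ^ 2) * (1 + ⟪ω, vhat v⟫) ^ 2)

/-!
For `‖u‖ < 1` the ellipsoid `‖x‖ + ⟪x, u⟫ < 1` is the preimage of a ball under a linear map that
contracts lengths along `u` by the Lorentz factor `γ = γ(u)`. Computing its volume in polar
coordinates shows that `∫ (1 + ⟪ω, u⟫)⁻ⁿ dω = |S| γⁿ⁺¹`, where `n` is the dimension and `|S|` the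
area of the unit sphere. Along rays `t ↦ t • u` this is a first-order differential equation for the
integral of `(1 + ⟪ω, u⟫)⁻⁽ⁿ⁻¹⁾`, whose solution is `|S| γⁿ⁻¹`. Differentiating the latter once and
twice in `u` gives the integrals of `⟪ω, e⟫ (1 + ⟪ω, u⟫)⁻ⁿ` and `⟪ω, e⟫ ⟪ω, f⟫ (1 + ⟪ω, u⟫)⁻⁽ⁿ⁺¹⁾`,
and the kernel is a combination of these integrands for which everything cancels.
-/

open Module Metric Set Filter Topology

section Calculus

theorem hasDerivAt_inv_pow_of_ne_zero {x : ℝ} (hx : x ≠ 0) (n : ℕ) :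
    HasDerivAt (fun y => (y ^ n)⁻¹) (-n * (x ^ (n + 1))⁻¹) x := by
  refine ((hasDerivAt_pow n x).inv (pow_ne_zero n hx)).congr_deriv ?_
  cases n with
  | zero => simp
  | succ n => rw [Nat.add_sub_cancel]; field

theorem eqOn_zero_of_hasFDerivAt_apply_self_eq_neg_smul {E F : Type*}
    [NormedAddCommGroup E] [NormedSpace ℝ E] [NormedAddCommGroup F] [NormedSpace ℝ F]
    {s : Set E} (hs : StarConvex ℝ 0 s) {D : E → F} {D' : E → E →L[ℝ] F} {m : ℕ} (hm : m ≠ 0)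
    (hD : ∀ w ∈ s, HasFDerivAt D (D' w) w) (hD' : ∀ w ∈ s, D' w w = -(m : ℝ) • D w) :
    EqOn D 0 s := by
  intro u hu
  -- `D' w w = -m • D w` says that `t ^ m • D (t • u)` does not depend on `t`; it vanishes at `0`.
  have hderiv (t : ℝ) (ht : t ∈ Icc (0 : ℝ) 1) :
      HasDerivAt (fun t : ℝ => t ^ m • D (t • u)) 0 t := by
    have hmem : t • u ∈ s := hs.smul_mem hu ht.1 ht.2
    have hcomp : HasDerivAt (fun t : ℝ => D (t • u)) (D' (t • u) u) t := by
      simpa [Function.comp_def] using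
        (hD _ hmem).comp_hasDerivAt t ((hasDerivAt_id t).smul_const u)
    have heuler : t • D' (t • u) u = -(m : ℝ) • D (t • u) := by
      rw [← map_smul, hD' _ hmem]
    refine ((hasDerivAt_pow m t).smul hcomp).congr_deriv ?_
    rw [← mul_pow_sub_one hm, mul_comm t, mul_smul, heuler]
    module
  have hconst := constant_of_has_deriv_right_zero
    (fun t ht => (hderiv t ht).continuousAt.continuousWithinAt)
    (fun t ht => (hderiv t (Ico_subset_Icc_self ht)).hasDerivWithinAt) 1 (by simp)
  simpa [hm] using hconst

theorem hasFDerivAt_integral_of_compactSpace {X H G : Type*}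
    [TopologicalSpace X] [CompactSpace X] [MeasurableSpace X] [OpensMeasurableSpace X]
    [TopologicalSpace.PseudoMetrizableSpace X]
    [NormedAddCommGroup H] [NormedSpace ℝ H] [LocallyCompactSpace H]
    [NormedAddCommGroup G] [NormedSpace ℝ G]
    (σ : Measure X) [IsFiniteMeasure σ] {U : Set H} {F : H → X → G} {F' : H → X → H →L[ℝ] G}
    {u : H} (hU : U ∈ 𝓝 u) (hF : ∀ w ∈ U, Continuous (F w))
    (hF' : ContinuousOn (fun p : H × X => F' p.1 p.2) (U ×ˢ univ))
    (hderiv : ∀ w ∈ U, ∀ x, HasFDerivAt (F · x) (F' w x) w) :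
    HasFDerivAt (fun w => ∫ x, F w x ∂σ) (∫ x, F' u x ∂σ) u := by
  obtain ⟨K, hK, hKU, hKc⟩ := local_compact_nhds hU
  obtain ⟨C, hC⟩ := (hKc.prod isCompact_univ).exists_bound_of_continuousOn
    (hF'.mono (prod_mono_left hKU))
  have hu : u ∈ U := mem_of_mem_nhds hU
  have hF'u : Continuous (F' u) :=
    hF'.comp_continuous (Continuous.prodMk_right u) fun x => ⟨hu, mem_univ x⟩
  exact hasFDerivAt_integral_of_dominated_of_fderiv_le hK
    (eventually_of_mem hU fun w hw => (hF w hw).aestronglyMeasurable_of_compactSpace)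
    ((hF u hu).integrable_of_hasCompactSupport (.of_compactSpace _))
    hF'u.aestronglyMeasurable_of_compactSpace
    (.of_forall fun x w hw => hC (w, x) ⟨hw, mem_univ x⟩)
    (integrable_const C)
    (.of_forall fun x w hw => hderiv w (hKU hw) x)

end Calculus

section Polar

variable {E : Type*} [NormedAddCommGroup E] [NormedSpace ℝ E] [Nontrivial E]
  [FiniteDimensional ℝ E] [MeasurableSpace E] [BorelSpace E]
  (μ : Measure E) [μ.IsAddHaarMeasure]

theorem measure_lt_one_eq_lintegral_toSphere {f : E → ℝ} (hf : Measurable f)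
    (hhom : ∀ r : ℝ, 0 < r → ∀ x : E, f (r • x) = r * f x)
    (hpos : ∀ ω ∈ sphere (0 : E) 1, 0 < f ω) :
    μ {x | f x < 1} = ∫⁻ ω : sphere (0 : E) 1,
      ENNReal.ofReal ((f ω ^ finrank ℝ E)⁻¹ / finrank ℝ E) ∂μ.toSphere := by
  set T : Set (sphere (0 : E) 1 × Ioi (0 : ℝ)) := {p | p.2.1 * f p.1 < 1} with hT
  have hTm : MeasurableSet T := measurableSet_lt (by fun_prop) measurable_const
  have hpolar : homeomorphUnitSphereProd E ⁻¹' T = Subtype.val ⁻¹' {x | f x < 1} := by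
    ext x
    have hx : 0 < ‖(x : E)‖ := norm_pos_iff.2 x.2
    simp [hT, ← hhom _ hx, smul_inv_smul₀ hx.ne']
  have hslice (ω : sphere (0 : E) 1) :
      Prod.mk ω ⁻¹' T = Iio (⟨(f ω)⁻¹, inv_pos.2 (hpos ω ω.2)⟩ : Ioi (0 : ℝ)) := by
    ext r
    simp [hT, ← Subtype.coe_lt_coe, ← lt_div_iff₀ (hpos ω ω.2)]
  have hdim : finrank ℝ E - 1 + 1 = finrank ℝ E := Nat.sub_add_cancel finrank_pos
  calc μ {x | f x < 1}
      = μ.comap (Subtype.val : ({0}ᶜ : Set E) → E) (Subtype.val ⁻¹' {x | f x < 1}) := by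
        rw [comap_subtype_coe_apply (measurableSet_singleton _).compl,
          Subtype.image_preimage_coe, inter_comm, ← Set.sdiff_eq,
          measure_sdiff_null (measure_singleton _)]
    _ = (μ.toSphere.prod (.volumeIoiPow (finrank ℝ E - 1))) T := by
        rw [← hpolar, μ.measurePreserving_homeomorphUnitSphereProd.measure_preimage
          hTm.nullMeasurableSet]
    _ = _ := by
        rw [Measure.prod_apply hTm]
        refine lintegral_congr fun ω => ?_
        rw [hslice, Measure.volumeIoiPow_apply_Iio, ← Nat.cast_add_one, hdim, inv_pow]

end Polar

section Ellipsoid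

/-- The Lorentz factor `γ(u) = (1 - ‖u‖²)^(-1/2)` of the velocity `u`, in units where light has
speed `1`; it is meaningful for `‖u‖ < 1` only. -/
noncomputable def lorentzFactor {E : Type*} [Norm E] (u : E) : ℝ :=
  (√(1 - ‖u‖ ^ 2))⁻¹

section Norm

variable {E : Type*} [SeminormedAddCommGroup E] {u : E}

theorem one_sub_norm_sq_pos (hu : ‖u‖ < 1) : 0 < 1 - ‖u‖ ^ 2 :=
  sub_pos.2 ((sq_lt_one_iff₀ (norm_nonneg u)).2 hu)

theorem lorentzFactor_pos (hu : ‖u‖ < 1) : 0 < lorentzFactor u :=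
  inv_pos.2 (Real.sqrt_pos.2 (one_sub_norm_sq_pos hu))

theorem norm_sq_eq_one_sub_lorentzFactor (hu : ‖u‖ < 1) :
    ‖u‖ ^ 2 = 1 - (lorentzFactor u ^ 2)⁻¹ := by
  rw [lorentzFactor, inv_pow, inv_inv, Real.sq_sqrt (one_sub_norm_sq_pos hu).le, sub_sub_cancel]

end Norm

variable {E : Type*} [NormedAddCommGroup E] [InnerProductSpace ℝ E] {u : E}

/-- The linear map that contracts lengths by the factor `γ(u)⁻¹` in the direction of `u` and fixes
the orthogonal complement of `u`. -/
noncomputable def lorentzContraction (u : E) : E →ₗ[ℝ] E :=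
  .transvection (-(1 + (lorentzFactor u)⁻¹)⁻¹ • innerₛₗ ℝ u) u

theorem lorentzContraction_apply (u x : E) :
    lorentzContraction u x = x - ((1 + (lorentzFactor u)⁻¹)⁻¹ * ⟪x, u⟫) • u := by
  simp [lorentzContraction, LinearMap.transvection.apply, real_inner_comm, sub_eq_add_neg]

theorem norm_lorentzContraction_sq (hu : ‖u‖ < 1) (x : E) :
    ‖lorentzContraction u x‖ ^ 2 = ‖x‖ ^ 2 - ⟪x, u⟫ ^ 2 := by
  have hγ := lorentzFactor_pos hu
  rw [lorentzContraction_apply, norm_sub_sq_real, norm_smul, inner_smul_right, mul_pow,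
    norm_eq_abs, sq_abs, norm_sq_eq_one_sub_lorentzFactor hu]
  field

theorem inner_lorentzContraction (hu : ‖u‖ < 1) (x : E) :
    ⟪lorentzContraction u x, u⟫ = (lorentzFactor u)⁻¹ * ⟪x, u⟫ := by
  have hγ := lorentzFactor_pos hu
  rw [lorentzContraction_apply, inner_sub_left, real_inner_smul_left, real_inner_self_eq_norm_sq,
    norm_sq_eq_one_sub_lorentzFactor hu]
  field

theorem det_lorentzContraction [FiniteDimensional ℝ E] (hu : ‖u‖ < 1) :
    LinearMap.det (lorentzContraction u) = (lorentzFactor u)⁻¹ := by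
  have hγ := lorentzFactor_pos hu
  rw [lorentzContraction, LinearMap.transvection.det, LinearMap.smul_apply, innerₛₗ_apply_apply,
    real_inner_self_eq_norm_sq, smul_eq_mul, norm_sq_eq_one_sub_lorentzFactor hu]
  field

theorem norm_add_inner_lt_one_iff (hu : ‖u‖ < 1) (x : E) :
    ‖x‖ + ⟪x, u⟫ < 1 ↔ ‖x‖ ^ 2 < (1 - ⟪x, u⟫) ^ 2 := by
  have hcs : |⟪x, u⟫| ≤ ‖x‖ :=
    (abs_real_inner_le_norm x u).trans (mul_le_of_le_one_right (norm_nonneg x) hu.le)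
  have hle : ⟪x, u⟫ ≤ ‖x‖ := (abs_le.1 hcs).2
  rw [sq_lt_sq, abs_norm, lt_abs, or_iff_left (by linarith), lt_sub_iff_add_lt]

theorem setOf_norm_add_inner_lt_one_eq_preimage_ball (hu : ‖u‖ < 1) :
    {x | ‖x‖ + ⟪x, u⟫ < 1} =
      lorentzContraction u ⁻¹' ball (-(lorentzFactor u • u)) (lorentzFactor u) := by
  ext x
  have hγ := lorentzFactor_pos hu
  have hnorm : ‖lorentzContraction u x + lorentzFactor u • u‖ ^ 2 =
      ‖x‖ ^ 2 - (1 - ⟪x, u⟫) ^ 2 + lorentzFactor u ^ 2 := by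
    rw [norm_add_sq_real, norm_lorentzContraction_sq hu, inner_smul_right,
      inner_lorentzContraction hu, norm_smul, mul_pow, norm_eq_abs, sq_abs,
      norm_sq_eq_one_sub_lorentzFactor hu]
    field
  rw [mem_ofPred_eq, norm_add_inner_lt_one_iff hu, mem_preimage, mem_ball, dist_eq_norm,
    sub_neg_eq_add, ← sq_lt_sq₀ (norm_nonneg _) hγ.le, hnorm, add_lt_iff_neg_right, sub_neg]

theorem measure_norm_add_inner_lt_one [MeasurableSpace E] [BorelSpace E] [FiniteDimensional ℝ E]
    (μ : Measure E) [μ.IsAddHaarMeasure] (hu : ‖u‖ < 1) :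
    μ {x | ‖x‖ + ⟪x, u⟫ < 1} =
      ENNReal.ofReal (lorentzFactor u ^ (finrank ℝ E + 1)) * μ (ball 0 1) := by
  have hγ := lorentzFactor_pos hu
  rw [setOf_norm_add_inner_lt_one_eq_preimage_ball hu, Measure.addHaar_preimage_linearMap _
    (by rw [det_lorentzContraction hu]; exact (inv_pos.2 hγ).ne'), det_lorentzContraction hu,
    inv_inv, Measure.addHaar_ball_of_pos _ _ hγ, ← mul_assoc, abs_of_pos hγ,
    ← ENNReal.ofReal_mul hγ.le, pow_succ']

theorem hasFDerivAt_lorentzFactor_pow (hu : ‖u‖ < 1) (m : ℕ) :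
    HasFDerivAt (fun w : E => lorentzFactor w ^ m)
      ((m * lorentzFactor u ^ (m + 2)) • innerSL ℝ u) u := by
  have hsqrt := (((hasStrictFDerivAt_norm_sq u).hasFDerivAt).const_sub 1).sqrt
    (one_sub_norm_sq_pos hu).ne'
  have hpos : √(1 - ‖u‖ ^ 2) ≠ 0 := (Real.sqrt_pos.2 (one_sub_norm_sq_pos hu)).ne'
  have h := (hasDerivAt_inv_pow_of_ne_zero hpos m).comp_hasFDerivAt u hsqrt
  simp only [lorentzFactor, inv_pow]
  refine h.congr_fderiv ?_
  ext e
  simp only [one_div, smul_neg, neg_apply, smul_apply, coe_innerSL_apply, nsmul_eq_mul,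
    Nat.cast_ofNat, smul_eq_mul]
  field

end Ellipsoid

section Sphere

variable {E : Type*} [NormedAddCommGroup E] [InnerProductSpace ℝ E] {u : E}

theorem one_add_inner_pos_of_mem_sphere (hu : ‖u‖ < 1) {ω : E} (hω : ω ∈ sphere (0 : E) 1) :
    0 < 1 + ⟪ω, u⟫ := by
  have hcs := neg_le_of_abs_le (abs_real_inner_le_norm ω u)
  rw [mem_sphere_zero_iff_norm.1 hω, one_mul] at hcs
  linarith

theorem continuous_mul_inv_one_add_inner_pow (hu : ‖u‖ < 1) {g : sphere (0 : E) 1 → ℝ}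
    (hg : Continuous g) (n : ℕ) :
    Continuous fun ω : sphere (0 : E) 1 => g ω * ((1 + ⟪(ω : E), u⟫) ^ n)⁻¹ :=
  hg.mul <| Continuous.inv₀ (by fun_prop) fun ω =>
    (pow_pos (one_add_inner_pos_of_mem_sphere hu ω.2) n).ne'

variable [FiniteDimensional ℝ E] [MeasurableSpace E] [BorelSpace E]

theorem integrable_mul_inv_one_add_inner_pow (σ : Measure (sphere (0 : E) 1)) [IsFiniteMeasure σ]
    (hu : ‖u‖ < 1) {g : sphere (0 : E) 1 → ℝ} (hg : Continuous g) (n : ℕ) :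
    Integrable (fun ω => g ω * ((1 + ⟪(ω : E), u⟫) ^ n)⁻¹) σ :=
  (continuous_mul_inv_one_add_inner_pow hu hg n).integrable_of_hasCompactSupport
    (.of_compactSpace _)

theorem hasFDerivAt_integral_mul_inv_one_add_inner_pow (σ : Measure (sphere (0 : E) 1))
    [IsFiniteMeasure σ] (hu : ‖u‖ < 1) {g : sphere (0 : E) 1 → ℝ} (hg : Continuous g) (n : ℕ) :
    HasFDerivAt (fun w => ∫ ω, g ω * ((1 + ⟪(ω : E), w⟫) ^ n)⁻¹ ∂σ)
      (∫ ω, (g ω * (-n * ((1 + ⟪(ω : E), u⟫) ^ (n + 1))⁻¹)) • innerSL ℝ (ω : E) ∂σ) u := by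
  have hne (w : E) (hw : w ∈ ball (0 : E) 1) (ω : sphere (0 : E) 1) : 1 + ⟪(ω : E), w⟫ ≠ 0 :=
    (one_add_inner_pos_of_mem_sphere (mem_ball_zero_iff.1 hw) ω.2).ne'
  refine hasFDerivAt_integral_of_compactSpace σ (U := ball 0 1)
    (F' := fun w ω => (g ω * (-n * ((1 + ⟪(ω : E), w⟫) ^ (n + 1))⁻¹)) • innerSL ℝ (ω : E))
    (isOpen_ball.mem_nhds (mem_ball_zero_iff.2 hu))
    (fun w hw => continuous_mul_inv_one_add_inner_pow (mem_ball_zero_iff.1 hw) hg n) ?_ ?_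
  · have hinv : ContinuousOn (fun p : E × sphere (0 : E) 1 => ((1 + ⟪(p.2 : E), p.1⟫) ^ (n + 1))⁻¹)
        (ball 0 1 ×ˢ univ) :=
      ContinuousOn.inv₀ (by fun_prop) fun p hp => pow_ne_zero _ (hne p.1 hp.1 p.2)
    fun_prop
  · intro w hw ω
    have hinner : HasFDerivAt (fun w => 1 + ⟪(ω : E), w⟫) (innerSL ℝ (ω : E)) w :=
      (innerSL ℝ (ω : E)).hasFDerivAt.const_add 1
    refine (((hasDerivAt_inv_pow_of_ne_zero (hne w hw ω) n).comp_hasFDerivAt w hinner).const_mul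
      (g ω)).congr_fderiv ?_
    rw [smul_smul]

theorem integral_smul_innerSL_apply (σ : Measure (sphere (0 : E) 1)) [IsFiniteMeasure σ]
    (hu : ‖u‖ < 1) {g : sphere (0 : E) 1 → ℝ} (hg : Continuous g) (n : ℕ) (e : E) :
    (∫ ω, (g ω * (-n * ((1 + ⟪(ω : E), u⟫) ^ (n + 1))⁻¹)) • innerSL ℝ (ω : E) ∂σ) e =
      -n * ∫ ω, g ω * ⟪(ω : E), e⟫ * ((1 + ⟪(ω : E), u⟫) ^ (n + 1))⁻¹ ∂σ := by
  have hcont : Continuous fun ω : sphere (0 : E) 1 =>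
      (g ω * (-n * ((1 + ⟪(ω : E), u⟫) ^ (n + 1))⁻¹)) • innerSL ℝ (ω : E) := by
    have := continuous_mul_inv_one_add_inner_pow hu (continuous_const (y := -(n : ℝ))) (n + 1)
    fun_prop
  rw [ContinuousLinearMap.integral_apply
    (hcont.integrable_of_hasCompactSupport (.of_compactSpace _)), ← integral_const_mul]
  refine integral_congr_ae (.of_forall fun ω => ?_)
  simp only [smul_apply, innerSL_apply_apply, smul_eq_mul]
  ring

theorem integral_mul_inner_mul_inv_pow_succ_of_hasFDerivAt (σ : Measure (sphere (0 : E) 1))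
    [IsFiniteMeasure σ] (hu : ‖u‖ < 1) {g : sphere (0 : E) 1 → ℝ} (hg : Continuous g) {n : ℕ}
    (hn : n ≠ 0) {Φ : E → ℝ} {Φ' : E →L[ℝ] ℝ} (hΦ' : HasFDerivAt Φ Φ' u)
    (hΦ : ∀ w : E, ‖w‖ < 1 → ∫ ω, g ω * ((1 + ⟪(ω : E), w⟫) ^ n)⁻¹ ∂σ = Φ w) (e : E) :
    ∫ ω, g ω * ⟪(ω : E), e⟫ * ((1 + ⟪(ω : E), u⟫) ^ (n + 1))⁻¹ ∂σ = -Φ' e / n := by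
  have hball : ball (0 : E) 1 ∈ 𝓝 u := isOpen_ball.mem_nhds (mem_ball_zero_iff.2 hu)
  have hderiv := (hasFDerivAt_integral_mul_inv_one_add_inner_pow σ hu hg n).unique
    (hΦ'.congr_of_eventuallyEq (eventually_of_mem hball fun w hw => hΦ w (mem_ball_zero_iff.1 hw)))
  rw [← hderiv, integral_smul_innerSL_apply σ hu hg n e]
  field

theorem integral_inner_self_mul_inv_pow_succ (σ : Measure (sphere (0 : E) 1)) [IsFiniteMeasure σ]
    (hu : ‖u‖ < 1) (n : ℕ) :
    ∫ ω : sphere (0 : E) 1, ⟪(ω : E), u⟫ * ((1 + ⟪(ω : E), u⟫) ^ (n + 1))⁻¹ ∂σ =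
      ∫ ω : sphere (0 : E) 1, ((1 + ⟪(ω : E), u⟫) ^ n)⁻¹ ∂σ -
        ∫ ω : sphere (0 : E) 1, ((1 + ⟪(ω : E), u⟫) ^ (n + 1))⁻¹ ∂σ := by
  have hint (k : ℕ) : Integrable (fun ω : sphere (0 : E) 1 => ((1 + ⟪(ω : E), u⟫) ^ k)⁻¹) σ := by
    simpa using integrable_mul_inv_one_add_inner_pow σ hu (continuous_const (y := 1)) k
  rw [← integral_sub (hint n) (hint (n + 1))]
  refine integral_congr_ae (.of_forall fun ω => ?_)
  have hω := one_add_inner_pos_of_mem_sphere hu ω.2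
  field

variable (μ : Measure E) [μ.IsAddHaarMeasure]

theorem integral_inv_one_add_inner_pow_finrank [Nontrivial E] (hu : ‖u‖ < 1) :
    ∫ ω : sphere (0 : E) 1, ((1 + ⟪(ω : E), u⟫) ^ finrank ℝ E)⁻¹ ∂μ.toSphere =
      μ.toSphere.real univ * lorentzFactor u ^ (finrank ℝ E + 1) := by
  have hγ := lorentzFactor_pos hu
  have hdim : (finrank ℝ E : ℝ) ≠ 0 := by exact_mod_cast finrank_pos.ne'
  have hvol := measure_lt_one_eq_lintegral_toSphere μ (f := fun x => ‖x‖ + ⟪x, u⟫) (by fun_prop)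
    (fun r hr x => by rw [norm_smul, real_inner_smul_left, norm_of_nonneg hr.le, mul_add])
    (fun ω hω => by
      simpa [mem_sphere_zero_iff_norm.1 hω] using one_add_inner_pos_of_mem_sphere hu hω)
  simp only [norm_eq_of_mem_sphere] at hvol
  have hint : ∫ ω : sphere (0 : E) 1,
      ((1 + ⟪(ω : E), u⟫) ^ finrank ℝ E)⁻¹ / finrank ℝ E ∂μ.toSphere =
        lorentzFactor u ^ (finrank ℝ E + 1) * μ.real (ball 0 1) := by
    rw [integral_eq_lintegral_of_nonneg_ae, ← hvol, measure_norm_add_inner_lt_one μ hu,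
      ENNReal.toReal_mul, ENNReal.toReal_ofReal (by positivity), Measure.real]
    · refine .of_forall fun ω => ?_
      have := one_add_inner_pos_of_mem_sphere hu ω.2
      positivity
    · simpa using ((continuous_mul_inv_one_add_inner_pow hu (continuous_const (y := 1))
        (finrank ℝ E)).div_const _).aestronglyMeasurable
  rw [integral_div, div_eq_iff hdim] at hint
  rw [hint, Measure.toSphere_real_apply_univ]
  ring

theorem integral_inv_one_add_inner_pow_finrank_sub_one [Nontrivial E] (hu : ‖u‖ < 1) :
    ∫ ω : sphere (0 : E) 1, ((1 + ⟪(ω : E), u⟫) ^ (finrank ℝ E - 1))⁻¹ ∂μ.toSphere =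
      μ.toSphere.real univ * lorentzFactor u ^ (finrank ℝ E - 1) := by
  have hJ (w : E) (hw : ‖w‖ < 1) := integral_inv_one_add_inner_pow_finrank μ hw
  obtain ⟨m, hm⟩ : ∃ m, finrank ℝ E = m + 1 := Nat.exists_eq_succ_of_ne_zero finrank_pos.ne'
  rw [hm] at hJ
  rw [hm, Nat.add_sub_cancel]
  rcases eq_or_ne m 0 with rfl | hm0
  · simp
  have hD (w : E) (hw : w ∈ ball (0 : E) 1) :=
    (hasFDerivAt_integral_mul_inv_one_add_inner_pow μ.toSphere (mem_ball_zero_iff.1 hw)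
      (continuous_const (y := (1 : ℝ))) m).sub
    ((hasFDerivAt_lorentzFactor_pow (mem_ball_zero_iff.1 hw) m).const_mul
      (μ.toSphere.real univ))
  have hzero := eqOn_zero_of_hasFDerivAt_apply_self_eq_neg_smul
    ((convex_ball (0 : E) 1).starConvex (mem_ball_self one_pos)) hm0 hD ?_
    (mem_ball_zero_iff.2 hu)
  · simpa [sub_eq_zero] using hzero
  intro w hw
  rw [mem_ball_zero_iff] at hw
  have hγ := lorentzFactor_pos hw
  rw [sub_apply, integral_smul_innerSL_apply _ hw continuous_const]
  simp only [smul_apply, innerSL_apply_apply, smul_eq_mul, one_mul,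
    Pi.sub_apply, real_inner_self_eq_norm_sq, norm_sq_eq_one_sub_lorentzFactor hw]
  rw [integral_inner_self_mul_inv_pow_succ _ hw, hJ w hw]
  field

theorem integral_inner_mul_inv_one_add_inner_pow_finrank (hE : 1 < finrank ℝ E) (hu : ‖u‖ < 1)
    (e : E) :
    ∫ ω : sphere (0 : E) 1, ⟪(ω : E), e⟫ * ((1 + ⟪(ω : E), u⟫) ^ finrank ℝ E)⁻¹ ∂μ.toSphere =
      -(μ.toSphere.real univ * (lorentzFactor u ^ (finrank ℝ E + 1) * ⟪u, e⟫)) := by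
  have : Nontrivial E := nontrivial_of_finrank_pos (zero_lt_one.trans hE)
  have hm : finrank ℝ E - 1 ≠ 0 := (Nat.sub_pos_of_lt hE).ne'
  have h := integral_mul_inner_mul_inv_pow_succ_of_hasFDerivAt μ.toSphere hu
    (continuous_const (y := 1)) hm
    ((hasFDerivAt_lorentzFactor_pow hu _).const_mul (μ.toSphere.real univ))
    (fun w hw => by simpa using integral_inv_one_add_inner_pow_finrank_sub_one μ hw) e
  simp only [one_mul, smul_apply, innerSL_apply_apply, smul_eq_mul,
    Nat.sub_add_cancel hE.le, show finrank ℝ E - 1 + 2 = finrank ℝ E + 1 by omega] at h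
  rw [h]
  field

theorem integral_inner_mul_inner_mul_inv_one_add_inner_pow_finrank_succ (hE : 1 < finrank ℝ E)
    (hu : ‖u‖ < 1) (e f : E) :
    ∫ ω : sphere (0 : E) 1,
        ⟪(ω : E), e⟫ * ⟪(ω : E), f⟫ * ((1 + ⟪(ω : E), u⟫) ^ (finrank ℝ E + 1))⁻¹ ∂μ.toSphere =
      μ.toSphere.real univ / finrank ℝ E * (lorentzFactor u ^ (finrank ℝ E + 1) * ⟪e, f⟫ +
        (finrank ℝ E + 1) * lorentzFactor u ^ (finrank ℝ E + 3) * ⟪u, e⟫ * ⟪u, f⟫) := by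
  have hinner : HasFDerivAt (fun w : E => ⟪w, e⟫) (innerSL ℝ e) u :=
    (innerSL ℝ e).hasFDerivAt.congr_of_eventuallyEq (.of_forall fun w => real_inner_comm e w)
  have h := integral_mul_inner_mul_inv_pow_succ_of_hasFDerivAt μ.toSphere hu
    (g := fun ω => ⟪(ω : E), e⟫) (by fun_prop) (zero_lt_one.trans hE).ne'
    (((hasFDerivAt_lorentzFactor_pow hu _).mul hinner).const_mul (μ.toSphere.real univ)).neg
    (fun w hw => integral_inner_mul_inv_one_add_inner_pow_finrank μ hE hw e) f
  rw [h]
  simp only [neg_apply, smul_apply, add_apply, innerSL_apply_apply, smul_eq_mul, neg_neg,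
    Nat.cast_add_one]
  ring

end Sphere

section Kernel

variable {E : Type*} [NormedAddCommGroup E] [InnerProductSpace ℝ E]

/-- The kernel `a^{kℓ}(ω, u)` in dimension `n = finrank ℝ E`, with arbitrary vectors `e`, `f` in
place of the basis vectors `e_k`, `e_ℓ`. The square `γ(u)²` of the Lorentz factor plays the role of
`1 + |v|²`. -/
noncomputable def lorentzKernel (e f ω u : E) : ℝ :=
  -finrank ℝ E * (⟪ω, f⟫ * ⟪u, e⟫ + ⟪ω, e⟫ * ⟪u, f⟫) /
    (lorentzFactor u ^ 2 * (1 + ⟪ω, u⟫) ^ finrank ℝ E)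
  - finrank ℝ E * (⟪ω, e⟫ * ⟪ω, f⟫) /
    ((lorentzFactor u ^ 2) ^ 2 * (1 + ⟪ω, u⟫) ^ (finrank ℝ E + 1))
  - (finrank ℝ E - 1) * (⟪u, e⟫ * ⟪u, f⟫) / (1 + ⟪ω, u⟫) ^ (finrank ℝ E - 1)
  + ⟪e, f⟫ / (lorentzFactor u ^ 2 * (1 + ⟪ω, u⟫) ^ (finrank ℝ E - 1))

theorem lorentzKernel_eq_linear_combination (e f ω u : E) :
    lorentzKernel e f ω u =
      -(finrank ℝ E * ⟪u, e⟫ / lorentzFactor u ^ 2) *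
          (⟪ω, f⟫ * ((1 + ⟪ω, u⟫) ^ finrank ℝ E)⁻¹) +
        -(finrank ℝ E * ⟪u, f⟫ / lorentzFactor u ^ 2) *
          (⟪ω, e⟫ * ((1 + ⟪ω, u⟫) ^ finrank ℝ E)⁻¹) +
        -(finrank ℝ E / lorentzFactor u ^ 4) *
          (⟪ω, e⟫ * ⟪ω, f⟫ * ((1 + ⟪ω, u⟫) ^ (finrank ℝ E + 1))⁻¹) +
        (⟪e, f⟫ / lorentzFactor u ^ 2 - (finrank ℝ E - 1) * (⟪u, e⟫ * ⟪u, f⟫)) *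
          (1 * ((1 + ⟪ω, u⟫) ^ (finrank ℝ E - 1))⁻¹) := by
  rw [lorentzKernel]
  generalize 1 + ⟪ω, u⟫ = d
  ring

theorem aklKernel_sphere_average_zero_general [FiniteDimensional ℝ E] [MeasurableSpace E]
    [BorelSpace E] (μ : Measure E) [μ.IsAddHaarMeasure] (hE : 1 < finrank ℝ E) (e f : E) {u : E}
    (hu : ‖u‖ < 1) :
    ∫ ω : sphere (0 : E) 1, lorentzKernel e f ω u ∂μ.toSphere = 0 := by
  have : Nontrivial E := nontrivial_of_finrank_pos (zero_lt_one.trans hE)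
  have hγ := lorentzFactor_pos hu
  have hint {g : sphere (0 : E) 1 → ℝ} (hg : Continuous g) (c : ℝ) (n : ℕ) :=
    (integrable_mul_inv_one_add_inner_pow μ.toSphere hu hg n).const_mul c
  have hf := hint (g := fun ω => ⟪(ω : E), f⟫) (by fun_prop)
  have he := hint (g := fun ω => ⟪(ω : E), e⟫) (by fun_prop)
  have hef := hint (g := fun ω => ⟪(ω : E), e⟫ * ⟪(ω : E), f⟫) (by fun_prop)
  have hone := hint (continuous_const (y := 1))
  simp only [lorentzKernel_eq_linear_combination]
  rw [integral_add (((hf _ _).fun_add (he _ _)).fun_add (hef _ _)) (hone _ _),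
    integral_add ((hf _ _).fun_add (he _ _)) (hef _ _), integral_add (hf _ _) (he _ _)]
  simp only [integral_const_mul, one_mul, integral_inv_one_add_inner_pow_finrank_sub_one μ hu,
    integral_inner_mul_inv_one_add_inner_pow_finrank μ hE hu,
    integral_inner_mul_inner_mul_inv_one_add_inner_pow_finrank_succ μ hE hu]
  obtain ⟨m, hm⟩ : ∃ m, finrank ℝ E = m + 1 := Nat.exists_eq_succ_of_ne_zero finrank_pos.ne'
  rw [hm, Nat.add_sub_cancel]
  push_cast
  field

theorem norm_vhat_sq (v : EuclideanSpace ℝ (Fin 3)) : ‖vhat v‖ ^ 2 = 1 - (1 + ‖v‖ ^ 2)⁻¹ := by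
  rw [vhat, norm_smul, mul_pow, norm_inv, inv_pow, norm_eq_abs, sq_abs,
    Real.sq_sqrt (by positivity)]
  field

theorem norm_vhat_lt_one (v : EuclideanSpace ℝ (Fin 3)) : ‖vhat v‖ < 1 := by
  rw [← sq_lt_one_iff₀ (norm_nonneg _), norm_vhat_sq]
  exact sub_lt_self 1 (by positivity)

theorem lorentzFactor_vhat_sq (v : EuclideanSpace ℝ (Fin 3)) :
    lorentzFactor (vhat v) ^ 2 = 1 + ‖v‖ ^ 2 := by
  rw [lorentzFactor, norm_vhat_sq, sub_sub_cancel, inv_pow, Real.sq_sqrt (by positivity), inv_inv]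

theorem aklKernel_eq_lorentzKernel (k l : Fin 3) (ω v : EuclideanSpace ℝ (Fin 3)) :
    aklKernel k l ω v =
      lorentzKernel (EuclideanSpace.single k 1) (EuclideanSpace.single l 1) ω (vhat v) := by
  have hkl : ⟪(EuclideanSpace.single k 1 : EuclideanSpace ℝ (Fin 3)),
      EuclideanSpace.single l 1⟫ = if k = l then 1 else 0 := by
    simp [EuclideanSpace.inner_single_right, eq_comm]
  rw [aklKernel, lorentzKernel, hkl, lorentzFactor_vhat_sq, finrank_euclideanSpace_fin]
  simp only [EuclideanSpace.inner_single_right, conj_trivial, one_mul]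
  norm_num

end Kernel

/-- The averaging property of the kernel `a^{kℓ}`: its integral over the unit sphere
vanishes for every `v ∈ ℝ³` and all `1 ≤ k, ℓ ≤ 3`. -/
theorem aklKernel_sphere_average_zero (k l : Fin 3) (v : EuclideanSpace ℝ (Fin 3)) :
    ∫ ω : Metric.sphere (0 : EuclideanSpace ℝ (Fin 3)) 1,
        aklKernel k l (ω : EuclideanSpace ℝ (Fin 3)) v
      ∂((volume : Measure (EuclideanSpace ℝ (Fin 3))).toSphere)
    = 0 := by
  simp only [aklKernel_eq_lorentzKernel]
  exact aklKernel_sphere_average_zero_general volume (by simp) _ _ (norm_vhat_lt_one v)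
end
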